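/- arXiv:1701.03253 — 2 statements merged into one kernel-verified Lean document; each statement's English description precedes it below -/
import Mathlib

section
/- For every ξ ∈ [0,1], the function x ↦ L2(ξ, x) is continuous on the interval [0, L1max(ξ)]. (Lemma 1, continuity part) -/
/-! In the coordinates `(s, t)` of the parallelogram, moving from `D(ξ)` by `(p, q)` changes
`s = ξ` by `(h12 q - h22 p) / d` and `t = ξ` by `(h21 p - h11 q) / d`, where
`d = h12 h21 - h11 h22 > 0`. All entries being positive, the extreme deviations over a rectangle
with sides `x`, `L` centred at `D(ξ)` occur at two opposite corners, in both directions. Hence the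
rectangle lies in the parallelogram iff `h22 x + h12 L ≤ 2 d m` and `h21 x + h11 L ≤ 2 d m`, with
`m = min ξ (1 - ξ)` (`rect_subset_iff`). Consequently `L2(ξ, x)` is the positive part of a minimum
of two affine functions of `x` (`L2fun_eq`), which is continuous. -/

noncomputable section

/-- The parallelogram `P = { (h11·s + h12·t, h21·s + h22·t) : s,t ∈ [0,1] }`. -/
def Pgram (h11 h12 h21 h22 : ℝ) : Set (ℝ × ℝ) :=
  { v | ∃ s ∈ Set.Icc (0:ℝ) 1, ∃ t ∈ Set.Icc (0:ℝ) 1,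
      v = (h11 * s + h12 * t, h21 * s + h22 * t) }

/-- The point `D(ξ)` on the diagonal of the parallelogram. -/
def Dpt (h11 h12 h21 h22 ξ : ℝ) : ℝ × ℝ := (ξ * (h11 + h12), ξ * (h21 + h22))

/-- Closed axis-aligned rectangle with horizontal side `L1`, vertical side `L2`, midpoint `c`. -/
def Rect (L1 L2 : ℝ) (c : ℝ × ℝ) : Set (ℝ × ℝ) :=
  { v | |v.1 - c.1| ≤ L1 / 2 ∧ |v.2 - c.2| ≤ L2 / 2 }

/-- `L1max(ξ)`: sup of horizontal segment lengths centered at `D(ξ)` fitting inside `P`. -/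
def L1max (h11 h12 h21 h22 ξ : ℝ) : ℝ :=
  sSup { L1 | L1 ≥ 0 ∧ Rect L1 0 (Dpt h11 h12 h21 h22 ξ) ⊆ Pgram h11 h12 h21 h22 }

/-- `L2(ξ, x)`: sup of vertical side lengths of rectangles with horizontal side `x`
centered at `D(ξ)` fitting inside `P`. -/
def L2fun (h11 h12 h21 h22 ξ x : ℝ) : ℝ :=
  sSup { L2 | L2 ≥ 0 ∧ Rect x L2 (Dpt h11 h12 h21 h22 ξ) ⊆ Pgram h11 h12 h21 h22 }

/-- Rectangle with horizontal side `x` extended vertically upwards from `c` by `L2`. -/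
def RectUp (x L2 : ℝ) (c : ℝ × ℝ) : Set (ℝ × ℝ) :=
  { v | |v.1 - c.1| ≤ x / 2 ∧ c.2 ≤ v.2 ∧ v.2 ≤ c.2 + L2 }

/-- Rectangle with horizontal side `x` extended vertically downwards from `c` by `L2`. -/
def RectDown (x L2 : ℝ) (c : ℝ × ℝ) : Set (ℝ × ℝ) :=
  { v | |v.1 - c.1| ≤ x / 2 ∧ c.2 - L2 ≤ v.2 ∧ v.2 ≤ c.2 }

/-- `L2up(ξ, x)`: sup of upward one-sided vertical extensions. -/
def L2up (h11 h12 h21 h22 ξ x : ℝ) : ℝ :=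
  sSup { L2 | L2 ≥ 0 ∧ RectUp x L2 (Dpt h11 h12 h21 h22 ξ) ⊆ Pgram h11 h12 h21 h22 }

/-- `L2down(ξ, x)`: sup of downward one-sided vertical extensions. -/
def L2down (h11 h12 h21 h22 ξ x : ℝ) : ℝ :=
  sSup { L2 | L2 ≥ 0 ∧ RectDown x L2 (Dpt h11 h12 h21 h22 ξ) ⊆ Pgram h11 h12 h21 h22 }

/-- Membership in the parallelogram, with Cramer's rule used to eliminate `s` and `t`. -/
lemma mem_Pgram_iff {h11 h12 h21 h22 : ℝ} (hdet : h11 * h22 - h12 * h21 < 0) (v : ℝ × ℝ) :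
    v ∈ Pgram h11 h12 h21 h22 ↔
      (0 ≤ h12 * v.2 - h22 * v.1 ∧ h12 * v.2 - h22 * v.1 ≤ h12 * h21 - h11 * h22) ∧
      (0 ≤ h21 * v.1 - h11 * v.2 ∧ h21 * v.1 - h11 * v.2 ≤ h12 * h21 - h11 * h22) := by
  have hd : 0 < h12 * h21 - h11 * h22 := by linarith
  constructor
  · rintro ⟨s, ⟨hs0, hs1⟩, t, ⟨ht0, ht1⟩, rfl⟩
    refine ⟨⟨?_, ?_⟩, ?_, ?_⟩ <;> dsimp only
    · nlinarith [mul_nonneg hd.le hs0]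
    · nlinarith [mul_nonneg hd.le (sub_nonneg.2 hs1)]
    · nlinarith [mul_nonneg hd.le ht0]
    · nlinarith [mul_nonneg hd.le (sub_nonneg.2 ht1)]
  · rintro ⟨⟨h1, h2⟩, h3, h4⟩
    refine ⟨(h12 * v.2 - h22 * v.1) / (h12 * h21 - h11 * h22),
      ⟨div_nonneg h1 hd.le, (div_le_one hd).2 h2⟩,
      (h21 * v.1 - h11 * v.2) / (h12 * h21 - h11 * h22),
      ⟨div_nonneg h3 hd.le, (div_le_one hd).2 h4⟩, ?_⟩
    have hne := hd.ne'
    ext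
    · dsimp only
      rw [mul_div_assoc', mul_div_assoc', ← add_div, eq_div_iff hne]
      ring
    · dsimp only
      rw [mul_div_assoc', mul_div_assoc', ← add_div, eq_div_iff hne]
      ring

lemma rect_subset_iff {h11 h12 h21 h22 : ℝ}
    (hpos11 : 0 < h11) (hpos12 : 0 < h12) (hpos21 : 0 < h21) (hpos22 : 0 < h22)
    (hdet : h11 * h22 - h12 * h21 < 0) (ξ : ℝ) {x L : ℝ} (hx : 0 ≤ x) (hL : 0 ≤ L) :
    Rect x L (Dpt h11 h12 h21 h22 ξ) ⊆ Pgram h11 h12 h21 h22 ↔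
      h22 * x + h12 * L ≤ 2 * (h12 * h21 - h11 * h22) * min ξ (1 - ξ) ∧
      h21 * x + h11 * L ≤ 2 * (h12 * h21 - h11 * h22) * min ξ (1 - ξ) := by
  have hd : 0 < h12 * h21 - h11 * h22 := by linarith
  constructor
  · intro h
    -- The upper left and lower right corners are extremal for both coordinates `s` and `t`.
    have hUL : (ξ * (h11 + h12) - x / 2, ξ * (h21 + h22) + L / 2) ∈ Pgram h11 h12 h21 h22 := by
      apply h
      constructor <;> simp only [Dpt] <;> rw [abs_le] <;> constructor <;> linarith
    have hLR : (ξ * (h11 + h12) + x / 2, ξ * (h21 + h22) - L / 2) ∈ Pgram h11 h12 h21 h22 := by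
      apply h
      constructor <;> simp only [Dpt] <;> rw [abs_le] <;> constructor <;> linarith
    rw [mem_Pgram_iff hdet] at hUL hLR
    obtain ⟨⟨a1, a2⟩, a3, a4⟩ := hUL
    obtain ⟨⟨b1, b2⟩, b3, b4⟩ := hLR
    dsimp only at a1 a2 a3 a4 b1 b2 b3 b4
    rcases min_choice ξ (1 - ξ) with e | e <;> rw [e] <;> constructor <;> nlinarith
  · rintro ⟨h1, h2⟩ v ⟨hv1, hv2⟩
    rw [mem_Pgram_iff hdet]
    simp only [Dpt, abs_le] at hv1 hv2
    obtain ⟨p1, p2⟩ := hv1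
    obtain ⟨q1, q2⟩ := hv2
    have m1 := mul_le_mul_of_nonneg_left (min_le_left ξ (1 - ξ)) hd.le
    have m2 := mul_le_mul_of_nonneg_left (min_le_right ξ (1 - ξ)) hd.le
    have e1 := mul_le_mul_of_nonneg_left p1 hpos22.le
    have e2 := mul_le_mul_of_nonneg_left p2 hpos22.le
    have e3 := mul_le_mul_of_nonneg_left p1 hpos21.le
    have e4 := mul_le_mul_of_nonneg_left p2 hpos21.le
    have f1 := mul_le_mul_of_nonneg_left q1 hpos12.le
    have f2 := mul_le_mul_of_nonneg_left q2 hpos12.le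
    have f3 := mul_le_mul_of_nonneg_left q1 hpos11.le
    have f4 := mul_le_mul_of_nonneg_left q2 hpos11.le
    refine ⟨⟨?_, ?_⟩, ?_, ?_⟩ <;> linarith

/-- Closed form of `L2(ξ, x)`. The outer `max 0` covers the case where no rectangle of width `x`
fits, in which `L2(ξ, x)` is the supremum of the empty set, that is `0`. -/
lemma L2fun_eq {h11 h12 h21 h22 : ℝ}
    (hpos11 : 0 < h11) (hpos12 : 0 < h12) (hpos21 : 0 < h21) (hpos22 : 0 < h22)
    (hdet : h11 * h22 - h12 * h21 < 0) (ξ : ℝ) {x : ℝ} (hx : 0 ≤ x) :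
    L2fun h11 h12 h21 h22 ξ x =
      max 0 (min ((2 * (h12 * h21 - h11 * h22) * min ξ (1 - ξ) - h22 * x) / h12)
        ((2 * (h12 * h21 - h11 * h22) * min ξ (1 - ξ) - h21 * x) / h11)) := by
  set M := min ((2 * (h12 * h21 - h11 * h22) * min ξ (1 - ξ) - h22 * x) / h12)
        ((2 * (h12 * h21 - h11 * h22) * min ξ (1 - ξ) - h21 * x) / h11) with hM
  have hset : { L | L ≥ 0 ∧ Rect x L (Dpt h11 h12 h21 h22 ξ) ⊆ Pgram h11 h12 h21 h22 } =
      Set.Icc 0 M := by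
    ext L
    simp only [Set.mem_ofPred_eq, Set.mem_Icc, ge_iff_le]
    refine and_congr_right fun hL => ?_
    rw [rect_subset_iff hpos11 hpos12 hpos21 hpos22 hdet ξ hx hL, hM, le_min_iff,
      le_div_iff₀ hpos12, le_div_iff₀ hpos11, le_sub_iff_add_le', le_sub_iff_add_le',
      mul_comm L, mul_comm L]
  rw [L2fun, hset]
  rcases le_or_gt 0 M with h | h
  · rw [csSup_Icc h, max_eq_right h]
  · rw [Set.Icc_eq_empty (not_le.2 h), Real.sSup_empty, max_eq_left h.le]

theorem stmt9 (h11 h12 h21 h22 : ℝ)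
    (hpos11 : 0 < h11) (hpos12 : 0 < h12) (hpos21 : 0 < h21) (hpos22 : 0 < h22)
    (hdet : h11 * h22 - h12 * h21 < 0) :
    ∀ ξ ∈ Set.Icc (0:ℝ) 1,
      ContinuousOn (fun x => L2fun h11 h12 h21 h22 ξ x)
        (Set.Icc 0 (L1max h11 h12 h21 h22 ξ)) := by
  intro ξ _
  refine ContinuousOn.congr (Continuous.continuousOn ?_)
    fun x hx => L2fun_eq hpos11 hpos12 hpos21 hpos22 hdet ξ hx.1
  fun_prop
end
end

section
/- For every x with 0 ≤ x ≤ L1max(1/2), L2up(1/2, x) = L2down(1/2, x) = L2(1/2, x) / 2. (Intermediate identity used in the proof of Theorem 1: at dimming target ξ = 1/2 the maximal upward and downward one-sided extensions coincide and each equals half the maximal symmetric vertical length.) -/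
/-!
The point `D(1/2)` is the centre of symmetry of the parallelogram `P`: the reflection
`v ↦ 2 D(1/2) - v` corresponds to `(s, t) ↦ (1 - s, 1 - t)` (`Pgram_reflect`). This reflection swaps
the upward and downward rectangles of the same height, so one fits in `P` exactly when the other
does. As the centred rectangle of height `2 L` is the union of the two one-sided rectangles of
height `L`, the set of admissible symmetric heights is twice the set of admissible one-sided
heights, and the supremum commutes with this scaling.
-/

noncomputable section

/-- `P` is symmetric under the point reflection in `D(1/2)`. -/
lemma Pgram_reflect {h11 h12 h21 h22 : ℝ} {v : ℝ × ℝ}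
    (hv : (h11 + h12 - v.1, h21 + h22 - v.2) ∈ Pgram h11 h12 h21 h22) :
    v ∈ Pgram h11 h12 h21 h22 := by
  obtain ⟨s, ⟨hs0, hs1⟩, t, ⟨ht0, ht1⟩, h⟩ := hv
  obtain ⟨h1, h2⟩ := Prod.mk.inj h
  refine ⟨1 - s, ⟨by linarith, by linarith⟩, 1 - t, ⟨by linarith, by linarith⟩, ?_⟩
  exact Prod.ext (by simp only; linarith) (by simp only; linarith)

lemma rectUp_subset_iff_rectDown_subset (h11 h12 h21 h22 x L : ℝ) :
    RectUp x L (Dpt h11 h12 h21 h22 (1 / 2)) ⊆ Pgram h11 h12 h21 h22 ↔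
      RectDown x L (Dpt h11 h12 h21 h22 (1 / 2)) ⊆ Pgram h11 h12 h21 h22 := by
  constructor <;> intro h v hv <;> apply Pgram_reflect <;> apply h <;>
    simp only [RectUp, RectDown, Dpt, Set.mem_ofPred_eq, abs_le] at hv ⊢ <;>
    obtain ⟨⟨h1, h2⟩, h3, h4⟩ := hv <;>
    refine ⟨⟨?_, ?_⟩, ?_, ?_⟩ <;> linarith

/-- A centred rectangle of height `2 L` is the union of its upper and lower halves. -/
lemma rect_two_mul (x : ℝ) {L : ℝ} (hL : 0 ≤ L) (c : ℝ × ℝ) :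
    Rect x (2 * L) c = RectUp x L c ∪ RectDown x L c := by
  ext v
  simp only [Rect, RectUp, RectDown, Set.mem_ofPred_eq, Set.mem_union, abs_le]
  constructor
  · rintro ⟨h, h1, h2⟩
    rcases le_total c.2 v.2 with h3 | h3
    · exact Or.inl ⟨h, h3, by linarith⟩
    · exact Or.inr ⟨h, by linarith, h3⟩
  · rintro (⟨h, h1, h2⟩ | ⟨h, h1, h2⟩) <;> exact ⟨h, by linarith, by linarith⟩

lemma rect_two_mul_subset_iff (h11 h12 h21 h22 x : ℝ) {L : ℝ} (hL : 0 ≤ L) :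
    Rect x (2 * L) (Dpt h11 h12 h21 h22 (1 / 2)) ⊆ Pgram h11 h12 h21 h22 ↔
      RectUp x L (Dpt h11 h12 h21 h22 (1 / 2)) ⊆ Pgram h11 h12 h21 h22 := by
  rw [rect_two_mul x hL, Set.union_subset_iff, ← rectUp_subset_iff_rectDown_subset, and_self_iff]

open scoped Pointwise

theorem stmt12 (h11 h12 h21 h22 : ℝ)
    (hpos11 : 0 < h11) (hpos12 : 0 < h12) (hpos21 : 0 < h21) (hpos22 : 0 < h22)
    (hdet : h11 * h22 - h12 * h21 < 0) :
    ∀ x, 0 ≤ x → x ≤ L1max h11 h12 h21 h22 (1 / 2) →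
      L2up h11 h12 h21 h22 (1 / 2) x = L2down h11 h12 h21 h22 (1 / 2) x ∧
      L2up h11 h12 h21 h22 (1 / 2) x = L2fun h11 h12 h21 h22 (1 / 2) x / 2 := by
  intro x _ _
  refine ⟨by simp only [L2up, L2down, rectUp_subset_iff_rectDown_subset], ?_⟩
  have hset : {L | L ≥ 0 ∧ Rect x L (Dpt h11 h12 h21 h22 (1 / 2)) ⊆ Pgram h11 h12 h21 h22} =
      (2 : ℝ) • {L | L ≥ 0 ∧
        RectUp x L (Dpt h11 h12 h21 h22 (1 / 2)) ⊆ Pgram h11 h12 h21 h22} := by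
    ext L
    simp only [Set.mem_smul_set, Set.mem_ofPred_eq, smul_eq_mul]
    constructor
    · rintro ⟨hL, h⟩
      refine ⟨L / 2, ⟨by positivity, ?_⟩, by ring⟩
      rw [← rect_two_mul_subset_iff _ _ _ _ _ (by positivity)]
      rwa [mul_div_cancel₀ L two_ne_zero]
    · rintro ⟨M, ⟨hM, h⟩, rfl⟩
      exact ⟨by positivity, (rect_two_mul_subset_iff _ _ _ _ _ hM).2 h⟩
  -- `sSup` on `ℝ` commutes with scaling even for unbounded or empty sets, where both sides are `0`.
  rw [L2fun, hset, Real.sSup_smul_of_nonneg zero_le_two, L2up, smul_eq_mul]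
  ring
end
end
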